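/- arXiv:2409.03335 — 3 statements merged into one kernel-verified Lean document; each statement's English description precedes it below -/
import Mathlib

section
/- Let x̃ = θ^S + σξ where ξ ~ N(0, I_p), σ > 0, S is uniformly distributed over the collection 𝕊̃ of all k-element subsets of [p] containing {1,…,k−1}, and θ^S(j) = (1/√k)·1{j ∈ S}. Let Σ be the (unconditional) covariance matrix of x̃. Then log det(Σ) ≤ p·log(σ²) + (p−k+1)·log(1 + 1/(k(p−k+1)σ²)). -/
open MeasureTheory ProbabilityTheory
open scoped ENNReal NNReal

noncomputable section

/-- The collection `𝕊̃` of all `k`-element subsets of `Fin p` containing the first `k-1`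
indices `{0, …, k-2}`. -/
def stildeF (p k : ℕ) : Finset (Finset (Fin p)) :=
  ((Finset.univ : Finset (Fin p)).powersetCard k).filter
    (fun T => ∀ i : Fin p, (i : ℕ) < k - 1 → i ∈ T)

/-- The vector `θ^T` with `θ^T(j) = 1/√k` for `j ∈ T` and `0` otherwise. -/
def thetaVec (p k : ℕ) (T : Finset (Fin p)) : Fin p → ℝ :=
  fun j => if j ∈ T then (Real.sqrt k)⁻¹ else 0

/-- The law of `x̃ = θ^S + σξ`, where `ξ ~ N(0, I_p)` and `S` is uniform over `𝕊̃`. -/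
def xtildeLaw (p k : ℕ) (σ : ℝ) : Measure (Fin p → ℝ) :=
  (((stildeF p k).card : ℝ≥0∞))⁻¹ •
    ∑ T ∈ stildeF p k,
      Measure.pi fun j : Fin p => gaussianReal (thetaVec p k T j) (Real.toNNReal (σ ^ 2))

/-- The mean of `x̃`. -/
def xtildeMean (p k : ℕ) (σ : ℝ) : Fin p → ℝ :=
  fun a => ∫ x, x a ∂(xtildeLaw p k σ)

/-- The covariance matrix `Σ` of `x̃`. -/
def xtildeCov (p k : ℕ) (σ : ℝ) : Matrix (Fin p) (Fin p) ℝ :=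
  Matrix.of fun a b => ∫ x,
    (x a - xtildeMean p k σ a) * (x b - xtildeMean p k σ b) ∂(xtildeLaw p k σ)

/-!
Write `θ` for the random mean. By the law of total covariance `Σ = σ² I + Cov θ`, so Hadamard's
inequality gives `log det Σ ≤ ∑ₐ log (σ² + Var θₐ)`. The first `k - 1` coordinates of `θ` are
deterministic and contribute `log σ²` each; each of the other `p - k + 1` coordinates equals `1/√k`
with probability `1 / (p - k + 1)`, so its variance is at most `E θₐ² = 1 / (k (p - k + 1))`.
-/

lemma log_add_le_log_add_log_one_add_div {v x c : ℝ} (hv : 0 < v) (hx : 0 ≤ x) (hxc : x ≤ c) :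
    Real.log (v + x) ≤ Real.log v + Real.log (1 + c / v) := by
  have hc : 0 ≤ c / v := div_nonneg (hx.trans hxc) hv.le
  rw [← Real.log_mul hv.ne' (by positivity), mul_one_add, mul_div_cancel₀ _ hv.ne']
  gcongr

section LogDet

open Finset Matrix

variable {n : Type*} [Fintype n] [DecidableEq n] {A : Matrix n n ℝ}

lemma log_det_le_trace_sub_card (hA : A.PosDef) :
    Real.log A.det ≤ A.trace - Fintype.card n := by
  have hdet : A.det = ∏ i, hA.isHermitian.eigenvalues i :=
    hA.isHermitian.det_eq_prod_eigenvalues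
  have htrace : A.trace = ∑ i, hA.isHermitian.eigenvalues i :=
    hA.isHermitian.trace_eq_sum_eigenvalues
  calc Real.log A.det = ∑ i, Real.log (hA.isHermitian.eigenvalues i) := by
        rw [hdet, Real.log_prod fun i _ ↦ (hA.eigenvalues_pos i).ne']
    _ ≤ ∑ i, (hA.isHermitian.eigenvalues i - 1) :=
        sum_le_sum fun i _ ↦ Real.log_le_sub_one_of_pos (hA.eigenvalues_pos i)
    _ = A.trace - Fintype.card n := by
        rw [sum_sub_distrib, htrace, sum_const, card_univ, nsmul_one]

-- Hadamard's inequality: rescale `A` to unit diagonal, where the trace bound becomes `log det ≤ 0`.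
theorem log_det_le_sum_log_diag (hA : A.PosDef) : Real.log A.det ≤ ∑ i, Real.log (A i i) := by
  set d : n → ℝ := fun i ↦ (√(A i i))⁻¹
  have hd (i : n) : 0 < d i := inv_pos.2 (Real.sqrt_pos.2 hA.diag_pos)
  have hdd (i : n) : d i * d i = (A i i)⁻¹ := by
    rw [← mul_inv, Real.mul_self_sqrt hA.diag_pos.le]
  have hB : (diagonal d * A * diagonal d).PosDef := by
    have hinj : Function.Injective (diagonal d).mulVec :=
      mulVec_injective_of_isUnit (isUnit_diagonal.2 (Pi.isUnit_iff.2 fun i ↦ (hd i).ne'.isUnit))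
    simpa using hA.conjTranspose_mul_mul_same hinj
  have htrace : (diagonal d * A * diagonal d).trace = Fintype.card n := by
    have hdiag (i : n) : (diagonal d * A * diagonal d) i i = 1 := by
      rw [mul_diagonal, diagonal_mul, mul_right_comm, hdd, inv_mul_cancel₀ hA.diag_pos.ne']
    simp [trace, hdiag]
  have hdet : (diagonal d * A * diagonal d).det = A.det * ∏ i, (A i i)⁻¹ := by
    simp only [← hdd, det_mul, det_diagonal, prod_mul_distrib]
    ring
  have hlog := log_det_le_trace_sub_card hB
  rw [htrace, sub_self, hdet, Real.log_mul hA.det_pos.ne'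
    (prod_ne_zero_iff.2 fun i _ ↦ inv_ne_zero hA.diag_pos.ne'),
    Real.log_prod fun i _ ↦ inv_ne_zero hA.diag_pos.ne'] at hlog
  simp only [Real.log_inv, sum_neg_distrib] at hlog
  linarith

end LogDet

section Scatter

open Finset Matrix
open scoped BigOperators

variable {α ι : Type*}

lemma expect_sub_expect_sq_le {K : Type*} [Field K] [LinearOrder K] [IsStrictOrderedRing K]
    (s : Finset α) (f : α → K) (c : K) :
    𝔼 i ∈ s, (f i - 𝔼 j ∈ s, f j) ^ 2 ≤ 𝔼 i ∈ s, (f i - c) ^ 2 := by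
  obtain rfl | hs := s.eq_empty_or_nonempty
  · simp
  set m := 𝔼 j ∈ s, f j with hm
  have hexpand (i : α) :
      (f i - c) ^ 2 = (f i - m) ^ 2 + ((m - c) * (2 * f i) - (m - c) * (m + c)) := by ring
  have hgap : 𝔼 i ∈ s, (f i - c) ^ 2 = 𝔼 i ∈ s, (f i - m) ^ 2 + (m - c) ^ 2 := by
    simp only [hexpand, expect_add_distrib, expect_sub_distrib, ← mul_expect, expect_const hs,
      ← hm]
    ring
  rw [hgap]
  exact le_add_of_nonneg_right (sq_nonneg _)

/-- The covariance matrix of the uniform distribution on the finite family of points `m i`,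
`i ∈ s`. It is normalised by `#s`, and is zero for empty `s`. -/
def scatterMatrix (s : Finset α) (m : α → ι → ℝ) : Matrix ι ι ℝ :=
  of fun a b ↦ 𝔼 i ∈ s, (m i a - 𝔼 j ∈ s, m j a) * (m i b - 𝔼 j ∈ s, m j b)

lemma scatterMatrix_diag_le (s : Finset α) (m : α → ι → ℝ) (a : ι) (c : ℝ) :
    scatterMatrix s m a a ≤ 𝔼 i ∈ s, (m i a - c) ^ 2 := by
  simpa only [scatterMatrix, of_apply, ← sq] using expect_sub_expect_sq_le s (m · a) c

lemma posSemidef_scatterMatrix [Finite ι] (s : Finset α) (m : α → ι → ℝ) :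
    (scatterMatrix s m).PosSemidef := by
  set d : α → ι → ℝ := fun i a ↦ m i a - 𝔼 j ∈ s, m j a
  have hsum : scatterMatrix s m = (#s : ℝ)⁻¹ • ∑ i ∈ s, vecMulVec (d i) (star (d i)) := by
    ext a b
    simp [scatterMatrix, d, expect_eq_sum_div_card, Matrix.sum_apply, vecMulVec_apply,
      div_eq_inv_mul]
  rw [hsum]
  exact (posSemidef_sum s fun i _ ↦ posSemidef_vecMulVec_self_star (d i)).smul (by positivity)

end Scatter

section UniformMixture

open Finset
open scoped BigOperators

variable {α Ω : Type*} [MeasurableSpace Ω]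

lemma integral_sub_mul_sub {μ : Measure Ω} [IsProbabilityMeasure μ] {X Y : Ω → ℝ}
    (hX : MemLp X 2 μ) (hY : MemLp Y 2 μ) (c d : ℝ) :
    ∫ x, (X x - c) * (Y x - d) ∂μ = cov[X, Y; μ] + (μ[X] - c) * (μ[Y] - d) := by
  have hX1 : Integrable X μ := hX.integrable one_le_two
  have hY1 : Integrable Y μ := hY.integrable one_le_two
  have hcov := covariance_eq_sub (hX.sub (memLp_const c)) (hY.sub (memLp_const d))
  simp only [Pi.sub_def, Pi.mul_def, covariance_sub_const_left, covariance_sub_const_right,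
    integral_sub, hX1, hY1, integrable_const, integral_const, probReal_univ, one_smul] at hcov
  linarith

/-- The law of a point drawn from `ν i`, where `i` is uniform on `s`. It is the zero measure
when `s` is empty. -/
def uniformMixture (s : Finset α) (ν : α → Measure Ω) : Measure Ω :=
  (#s : ℝ≥0∞)⁻¹ • ∑ i ∈ s, ν i

variable {s : Finset α} {ν : α → Measure Ω}

lemma integral_uniformMixture {f : Ω → ℝ} (hf : ∀ i ∈ s, Integrable f (ν i)) :
    ∫ x, f x ∂uniformMixture s ν = 𝔼 i ∈ s, ∫ x, f x ∂ν i := by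
  rw [uniformMixture, integral_smul_measure, integral_finsetSum_measure hf, ENNReal.toReal_inv,
    ENNReal.toReal_natCast, smul_eq_mul, expect_eq_sum_div_card, div_eq_inv_mul]

lemma covariance_uniformMixture [∀ i, IsProbabilityMeasure (ν i)] {X Y : Ω → ℝ}
    (hX : ∀ i ∈ s, MemLp X 2 (ν i)) (hY : ∀ i ∈ s, MemLp Y 2 (ν i)) :
    cov[X, Y; uniformMixture s ν] = 𝔼 i ∈ s, cov[X, Y; ν i] +
      𝔼 i ∈ s, ((ν i)[X] - 𝔼 j ∈ s, (ν j)[X]) * ((ν i)[Y] - 𝔼 j ∈ s, (ν j)[Y]) := by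
  have hprod (c d : ℝ) : ∀ i ∈ s, Integrable (fun x ↦ (X x - c) * (Y x - d)) (ν i) := fun i hi ↦
    ((hX i hi).sub (memLp_const c)).integrable_mul ((hY i hi).sub (memLp_const d))
  rw [covariance, integral_uniformMixture (hprod _ _),
    integral_uniformMixture fun i hi ↦ (hX i hi).integrable one_le_two,
    integral_uniformMixture fun i hi ↦ (hY i hi).integrable one_le_two, ← expect_add_distrib]
  exact expect_congr rfl fun i hi ↦ integral_sub_mul_sub (hX i hi) (hY i hi) _ _

end UniformMixture

section CovMatrix

open Finset Matrix

variable {α ι : Type*}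

/-- The matrix of covariances between the coordinates of a random vector with law `μ`. -/
def covMatrix (μ : Measure (ι → ℝ)) : Matrix ι ι ℝ :=
  of fun a b ↦ cov[fun x ↦ x a, fun x ↦ x b; μ]

variable [Fintype ι]

lemma memLp_eval_pi {E : ι → Type*} [∀ i, NormedAddCommGroup (E i)] [∀ i, MeasurableSpace (E i)]
    {μ : ∀ i, Measure (E i)} [∀ i, IsProbabilityMeasure (μ i)] {q : ℝ≥0∞} {a : ι}
    (h : MemLp id q (μ a)) : MemLp (fun x : ∀ i, E i ↦ x a) q (Measure.pi μ) :=
  h.comp_measurePreserving (measurePreserving_eval μ a)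

variable [DecidableEq ι]

lemma covMatrix_pi {μ : ι → Measure ℝ} [∀ i, IsProbabilityMeasure (μ i)]
    (h : ∀ i, MemLp id 2 (μ i)) : covMatrix (Measure.pi μ) = diagonal fun i ↦ Var[id; μ i] := by
  ext a b
  obtain rfl | hab := eq_or_ne a b
  · rw [covMatrix, of_apply, covariance_self (measurable_pi_apply a).aemeasurable,
      diagonal_apply_eq]
    exact (measurePreserving_eval μ a).variance_fun_comp (f := id) (by fun_prop)
  · have hindep : iIndepFun (fun i (x : ι → ℝ) ↦ x i) (Measure.pi μ) :=
      iIndepFun_pi (X := fun _ y ↦ y) fun _ ↦ aemeasurable_id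
    rw [diagonal_apply_ne _ hab]
    exact (hindep.indepFun hab).covariance_eq_zero (memLp_eval_pi (h a)) (memLp_eval_pi (h b))

/-- The law of `m i + √v • ξ`, where `i` is uniform on `s` and `ξ` is an independent standard
Gaussian vector. -/
def gaussianMixture (s : Finset α) (m : α → ι → ℝ) (v : ℝ≥0) : Measure (ι → ℝ) :=
  uniformMixture s fun i ↦ Measure.pi fun j ↦ gaussianReal (m i j) v

variable {s : Finset α}

lemma covMatrix_gaussianMixture (hs : s.Nonempty) (m : α → ι → ℝ) (v : ℝ≥0) :
    covMatrix (gaussianMixture s m v) = (v : ℝ) • 1 + scatterMatrix s m := by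
  set ν : α → Measure (ι → ℝ) := fun i ↦ Measure.pi fun j ↦ gaussianReal (m i j) v
  have hLp (a : ι) : ∀ i ∈ s, MemLp (fun x : ι → ℝ ↦ x a) 2 (ν i) := fun _ _ ↦
    memLp_eval_pi (memLp_id_gaussianReal 2)
  have hmean (i : α) (a : ι) : ∫ x, x a ∂ν i = m i a :=
    (integral_comp_eval (μ := fun j ↦ gaussianReal (m i j) v) (i := a) (f := id)
      aestronglyMeasurable_id).trans integral_id_gaussianReal
  have hcov (i : α) (a b : ι) :
      cov[fun x ↦ x a, fun x ↦ x b; ν i] = ((v : ℝ) • (1 : Matrix ι ι ℝ)) a b := by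
    have hmatrix : covMatrix (ν i) = (v : ℝ) • 1 := by
      rw [covMatrix_pi fun j ↦ memLp_id_gaussianReal 2, smul_one_eq_diagonal]
      simp only [variance_id_gaussianReal]
    rw [← hmatrix, covMatrix, of_apply]
  ext a b
  rw [covMatrix, of_apply, gaussianMixture, covariance_uniformMixture (hLp a) (hLp b)]
  simp only [hmean, hcov, expect_const hs, scatterMatrix, Matrix.add_apply, of_apply]

theorem log_det_covMatrix_gaussianMixture_le (hs : s.Nonempty) (m : α → ι → ℝ) {v : ℝ≥0}
    (hv : 0 < v) :
    Real.log (covMatrix (gaussianMixture s m v)).det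
      ≤ ∑ a, Real.log (v + scatterMatrix s m a a) := by
  have hpos : ((v : ℝ) • 1 + scatterMatrix s m).PosDef :=
    (PosDef.one.smul (NNReal.coe_pos.2 hv)).add_posSemidef (posSemidef_scatterMatrix s m)
  simpa [covMatrix_gaussianMixture hs] using log_det_le_sum_log_diag hpos

end CovMatrix

section SparseMeans

open Finset
open scoped BigOperators

variable {p k : ℕ}

/-- The indices shared by all members of `stildeF p k`: the set `{1, …, k - 1}` of the paper, here
`{0, …, k - 2}`. -/
def commonIndices (p k : ℕ) : Finset (Fin p) := {i | (i : ℕ) < k - 1}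

lemma card_compl_commonIndices (hk : 1 ≤ k) (hkp : k ≤ p) :
    #(commonIndices p k)ᶜ = p - k + 1 := by
  rw [card_compl, commonIndices, Fin.card_filter_val_lt, Fintype.card_fin]
  omega

lemma stildeF_eq_image_insert (hk : 1 ≤ k) (hkp : k ≤ p) :
    stildeF p k = (commonIndices p k)ᶜ.image (insert · (commonIndices p k)) := by
  have hcard : #(commonIndices p k) + 1 = k := by
    rw [commonIndices, Fin.card_filter_val_lt]
    omega
  have hshadow : (commonIndices p k)ᶜ.image (insert · (commonIndices p k)) =
      upShadow {commonIndices p k} := by rw [upShadow, sup_singleton]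
  ext T
  have hsub : (∀ i : Fin p, (i : ℕ) < k - 1 → i ∈ T) ↔ commonIndices p k ⊆ T := by
    simp [subset_iff, commonIndices]
  rw [hshadow, mem_upShadow_iff_exists_mem_card_add_one]
  simp [stildeF, hsub, hcard, and_comm]

lemma stildeF_nonempty (hk : 1 ≤ k) (hkp : k ≤ p) : (stildeF p k).Nonempty := by
  rw [stildeF_eq_image_insert hk hkp, image_nonempty, ← card_pos,
    card_compl_commonIndices hk hkp]
  exact Nat.succ_pos _

lemma expect_stildeF {M : Type*} [AddCommMonoid M] [Module ℚ≥0 M] (hk : 1 ≤ k) (hkp : k ≤ p)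
    (f : Finset (Fin p) → M) :
    𝔼 T ∈ stildeF p k, f T =
      𝔼 j ∈ (commonIndices p k)ᶜ, f (insert j (commonIndices p k)) := by
  rw [stildeF_eq_image_insert hk hkp, expect_image (insert_inj_on' _)]

lemma cast_card_compl_commonIndices (hk : 1 ≤ k) (hkp : k ≤ p) :
    (#(commonIndices p k)ᶜ : ℝ) = (p : ℝ) - k + 1 := by
  rw [card_compl_commonIndices hk hkp, Nat.cast_add_one, Nat.cast_sub hkp]

lemma scatterMatrix_thetaVec_diag_le (hk : 1 ≤ k) (hkp : k ≤ p) (a : Fin p) :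
    scatterMatrix (stildeF p k) (thetaVec p k) a a
      ≤ if a ∈ commonIndices p k then 0 else 1 / (k * ((p : ℝ) - k + 1)) := by
  split_ifs with ha
  · refine (scatterMatrix_diag_le _ _ a (√k)⁻¹).trans_eq ?_
    rw [expect_stildeF hk hkp]
    refine expect_eq_zero fun j _ ↦ ?_
    rw [thetaVec, if_pos (mem_insert_of_mem ha), sub_self, zero_pow two_ne_zero]
  · refine (scatterMatrix_diag_le _ _ a 0).trans_eq ?_
    have hsq (j : Fin p) : (thetaVec p k (insert j (commonIndices p k)) a - 0) ^ 2 =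
        if a = j then (k : ℝ)⁻¹ else 0 := by
      simp [thetaVec, ha, ite_pow]
    simp only [expect_stildeF hk hkp, hsq, expect_eq_sum_div_card, sum_ite_eq, mem_compl, ha,
      not_false_eq_true, if_true, cast_card_compl_commonIndices hk hkp]
    rw [one_div, mul_inv, div_eq_mul_inv]

lemma log_det_xtildeCov_le {σ : ℝ} (hσ : σ ≠ 0) (hk : 1 ≤ k) (hkp : k ≤ p) :
    Real.log (xtildeCov p k σ).det
      ≤ ∑ a, Real.log (σ ^ 2 + scatterMatrix (stildeF p k) (thetaVec p k) a a) := by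
  have hcov : xtildeCov p k σ =
      covMatrix (gaussianMixture (stildeF p k) (thetaVec p k) (σ ^ 2).toNNReal) := rfl
  have hle := log_det_covMatrix_gaussianMixture_le (stildeF_nonempty hk hkp) (thetaVec p k)
    (Real.toNNReal_pos.2 (sq_pos_of_ne_zero hσ))
  rwa [Real.coe_toNNReal _ (sq_nonneg σ), ← hcov] at hle

end SparseMeans

/-- Lemma 9: `log det Σ ≤ p log σ² + (p-k+1) log(1 + 1/(k(p-k+1)σ²))`. -/
theorem stmt8 (p k : ℕ) (σ : ℝ) (hσ : 0 < σ) (hk : 1 ≤ k) (hkp : k ≤ p) :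
    Real.log (xtildeCov p k σ).det
      ≤ (p : ℝ) * Real.log (σ ^ 2)
        + ((p : ℝ) - (k : ℝ) + 1) *
          Real.log (1 + 1 / ((k : ℝ) * ((p : ℝ) - (k : ℝ) + 1) * σ ^ 2)) := by
  set A : Finset (Fin p) := commonIndices p k
  set L : ℝ := Real.log (1 + 1 / ((k : ℝ) * ((p : ℝ) - (k : ℝ) + 1) * σ ^ 2))
  have hterm (a : Fin p) :
      Real.log (σ ^ 2 + scatterMatrix (stildeF p k) (thetaVec p k) a a)
        ≤ Real.log (σ ^ 2) + if a ∈ A then 0 else L := by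
    refine (log_add_le_log_add_log_one_add_div (pow_pos hσ 2)
      (posSemidef_scatterMatrix _ _).diag_nonneg
      (scatterMatrix_thetaVec_diag_le hk hkp a)).trans_eq ?_
    split_ifs
    · rw [zero_div, add_zero, Real.log_one]
    · rw [div_div]
  calc Real.log (xtildeCov p k σ).det
      ≤ ∑ a, Real.log (σ ^ 2 + scatterMatrix (stildeF p k) (thetaVec p k) a a) :=
        log_det_xtildeCov_le hσ.ne' hk hkp
    _ ≤ ∑ a, (Real.log (σ ^ 2) + if a ∈ A then 0 else L) := Finset.sum_le_sum fun a _ ↦ hterm a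
    _ = p * Real.log (σ ^ 2) + (Aᶜ.card : ℝ) * L := by
        simp [Finset.sum_add_distrib, Finset.sum_ite, Finset.compl_eq_univ_sdiff,
          Finset.filter_notMem_eq_sdiff]
    _ = p * Real.log (σ ^ 2) + ((p : ℝ) - (k : ℝ) + 1) * L := by
        rw [cast_card_compl_commonIndices hk hkp]
end
end

section
/- Let {(x_i, y_i)}_{i=1}^L be L i.i.d. labeled samples from the symmetric sparse Gaussian mixture model with a k-sparse μ, k = ⌊c₁ p^α⌋, whose nonzero entries are ±√(λ/k), and suppose L = ⌈(2βk/λ)·log(p−k)⌉ for some β ∈ (0, 1−α). Let β̃ = β − ε̃ for a sufficiently small fixed ε̃ > 0 with β̃ > 0, and let S_L be the indices of the top p̃ = ⌈p^{1−β̃}⌉ magnitudes of the vector w_L = (1/L)·Σ_{i=1}^L y_i x_i. Then for every ε > 0, P(|S ∩ S_L|/k ≥ 1−ε) → 1 as p → ∞. -/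
open MeasureTheory ProbabilityTheory Filter
open scoped ENNReal NNReal

noncomputable section

/-- Product of independent one-dimensional Gaussians `N(m j, 1)`: the law of `N(m, I_p)`. -/
def gaussPi {p : ℕ} (m : Fin p → ℝ) : Measure (Fin p → ℝ) :=
  Measure.pi fun j => gaussianReal (m j) 1

/-- The law of a labeled sample `(x, y)`: `y` uniform on `{-1,1}`, `x | y ~ N(yμ, I_p)`. -/
def labeledLaw {p : ℕ} (m : Fin p → ℝ) : Measure ((Fin p → ℝ) × ℝ) :=
  (2 : ℝ≥0∞)⁻¹ • (gaussPi m).map (fun x => (x, (1 : ℝ)))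
    + (2 : ℝ≥0∞)⁻¹ • (gaussPi (fun j => -m j)).map (fun x => (x, (-1 : ℝ)))

/-- The labeled-data vector `w_L = (1/L) ∑ᵢ yᵢ xᵢ`. -/
def wL {p L : ℕ} (dl : Fin L → (Fin p → ℝ) × ℝ) : Fin p → ℝ :=
  fun j => (L : ℝ)⁻¹ * ∑ i, (dl i).2 * (dl i).1 j

/-- `T` is a set of `m` indices with the largest magnitudes of `w`. -/
def IsTopAbs {p : ℕ} (m : ℕ) (w : Fin p → ℝ) (T : Finset (Fin p)) : Prop :=
  T.card = m ∧ ∀ i ∈ T, ∀ j ∉ T, |w j| ≤ |w i|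

/-!
Multiplying a sample by its label turns it into a draw from `N(μ, I)`, so every coordinate of `w_L`
deviates from that of `μ` by at least `t` with probability at most `2 exp (-L t² / 2)`. Put a
threshold `τ` strictly between `0` and the signal strength `r = √(λ/k)`. A support index is missed
only if its own coordinate deviates by at least `r - τ`, or if the indices exceeding `τ` outside the
support are too many to leave room for it in `S_L`. Markov's inequality applied to the expected
number of indices of either kind bounds both events. At `τ = r (β + β̃) / (2β)` both bounds are of
order `p ^ (-(β - β̃)² / (4β))`.
-/

open scoped Finset

section TopSelection

variable {p n : ℕ} {w m : Fin p → ℝ} {S T : Finset (Fin p)} {r τ : ℝ}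

theorem IsTopAbs.le (hT : IsTopAbs n w T) : n ≤ p := by
  simpa [hT.1] using Finset.card_le_univ T

theorem IsTopAbs.mem_of_card_le (hT : IsTopAbs n w T) {i : Fin p} (hi : τ ≤ |w i|)
    (hcard : #{j | τ ≤ |w j|} ≤ n) : i ∈ T := by
  by_contra hiT
  have hsub : insert i T ⊆ ({j | τ ≤ |w j|} : Finset (Fin p)) := by
    refine Finset.insert_subset (by simpa using hi) fun j hj => ?_
    simpa using hi.trans (hT.2 j hj i hiT)
  have hlt := Finset.card_le_card hsub
  rw [Finset.card_insert_of_notMem hiT, hT.1] at hlt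
  omega

theorem IsTopAbs.sdiff_subset (hT : IsTopAbs n w T) (hm0 : ∀ j ∉ S, m j = 0)
    (hmS : ∀ j ∈ S, r ≤ |m j|) (hcard : #S + #{j ∈ Sᶜ | τ ≤ |w j - m j|} ≤ n) :
    S \ T ⊆ {j ∈ S | r - τ ≤ |w j - m j|} := by
  have hexceed : ({j | τ ≤ |w j|} : Finset (Fin p)) ⊆ S ∪ {j ∈ Sᶜ | τ ≤ |w j - m j|} := by
    intro j hj
    by_cases hjS : j ∈ S <;> simp_all
  intro i hi
  obtain ⟨hiS, hiT⟩ := Finset.mem_sdiff.1 hi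
  refine Finset.mem_filter.2 ⟨hiS, ?_⟩
  by_contra! hdev
  have hwi : τ ≤ |w i| := by
    have := abs_sub_abs_le_abs_sub (m i) (w i)
    rw [abs_sub_comm] at this
    linarith [hmS i hiS]
  exact hiT (hT.mem_of_card_le hwi
    ((Finset.card_le_card hexceed).trans ((Finset.card_union_le _ _).trans hcard)))

end TopSelection

section Counting

variable {Ω : Type*} [MeasurableSpace Ω] {P : Measure Ω}

theorem measureReal_le_card_filter_le [IsFiniteMeasure P] {ι : Type*} {A : Finset ι}
    {E : ι → Ω → Prop} [∀ ω, DecidablePred fun i => E i ω]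
    (hE : ∀ i ∈ A, MeasurableSet {ω | E i ω}) {a : ℝ} (ha : 0 < a) :
    P.real {ω | a ≤ #{i ∈ A | E i ω}} ≤ (∑ i ∈ A, P.real {ω | E i ω}) / a := by
  have hcard (ω : Ω) : (#{i ∈ A | E i ω} : ℝ) = ∑ i ∈ A, {ω | E i ω}.indicator 1 ω := by
    simp only [Finset.card_filter, Nat.cast_sum, Nat.cast_ite, Nat.cast_one, Nat.cast_zero,
      Set.indicator_apply, Set.mem_ofPred_eq, Pi.one_apply]
  have hint : ∀ i ∈ A, Integrable ({ω | E i ω}.indicator (1 : Ω → ℝ)) P := fun i hi =>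
    (integrable_const 1).indicator (hE i hi)
  have hmean : ∫ ω, (#{i ∈ A | E i ω} : ℝ) ∂P = ∑ i ∈ A, P.real {ω | E i ω} := by
    simp_rw [hcard]
    rw [integral_finsetSum _ hint]
    exact Finset.sum_congr rfl fun i hi => integral_indicator_one (hE i hi)
  have hcard_int : Integrable (fun ω => (#{i ∈ A | E i ω} : ℝ)) P := by
    simp_rw [hcard]
    exact integrable_finsetSum _ hint
  rw [le_div_iff₀ ha, mul_comm, ← hmean]
  exact mul_meas_ge_le_integral_of_nonneg (ae_of_all _ fun ω => Nat.cast_nonneg _) hcard_int a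

theorem measureReal_card_sdiff_ge_le [IsProbabilityMeasure P] {p n : ℕ} {w : Ω → Fin p → ℝ}
    (hw : ∀ j, Measurable fun ω => w ω j) {T : Ω → Finset (Fin p)}
    (hT : ∀ ω, IsTopAbs n (w ω) (T ω)) {S : Finset (Fin p)} (hS : S.Nonempty) (hSn : #S < n)
    {m : Fin p → ℝ} {r τ ε : ℝ} (hm0 : ∀ j ∉ S, m j = 0) (hmS : ∀ j ∈ S, r ≤ |m j|)
    (hε : 0 < ε) :
    P.real {ω | ε * #S ≤ #(S \ T ω)} ≤
      (∑ j ∈ Sᶜ, P.real {ω | τ ≤ |w ω j - m j|}) / (n - #S) +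
        (∑ j ∈ S, P.real {ω | r - τ ≤ |w ω j - m j|}) / (ε * #S) := by
  have hS0 : (0 : ℝ) < #S := mod_cast hS.card_pos
  have hSn' : (#S : ℝ) < n := mod_cast hSn
  have hmeas (s : ℝ) (j : Fin p) : MeasurableSet {ω | s ≤ |w ω j - m j|} :=
    measurableSet_le measurable_const ((hw j).sub_const _).abs
  have hsub : {ω | ε * #S ≤ #(S \ T ω)} ⊆
      {ω | (n - #S : ℝ) ≤ #{j ∈ Sᶜ | τ ≤ |w ω j - m j|}} ∪
        {ω | ε * #S ≤ #{j ∈ S | r - τ ≤ |w ω j - m j|}} := by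
    intro ω hω
    refine or_iff_not_imp_left.2 fun hfew => ?_
    have hcard : #S + #{j ∈ Sᶜ | τ ≤ |w ω j - m j|} ≤ n := by
      have hfew' : (#{j ∈ Sᶜ | τ ≤ |w ω j - m j|} : ℝ) < n - #S := not_le.1 hfew
      have : (#S + #{j ∈ Sᶜ | τ ≤ |w ω j - m j|} : ℝ) ≤ n := by linarith
      exact_mod_cast this
    have hmissed := Finset.card_le_card ((hT ω).sdiff_subset hm0 hmS hcard)
    exact (Set.mem_ofPred.1 hω).trans (Nat.cast_le.2 hmissed)
  calc P.real {ω | ε * #S ≤ #(S \ T ω)}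
      ≤ P.real {ω | (n - #S : ℝ) ≤ #{j ∈ Sᶜ | τ ≤ |w ω j - m j|}} +
          P.real {ω | ε * #S ≤ #{j ∈ S | r - τ ≤ |w ω j - m j|}} :=
        (measureReal_mono hsub).trans (measureReal_union_le _ _)
    _ ≤ _ := add_le_add
        (measureReal_le_card_filter_le (fun j _ => hmeas τ j) (sub_pos.2 hSn'))
        (measureReal_le_card_filter_le (fun j _ => hmeas (r - τ) j) (mul_pos hε hS0))

theorem one_sub_measureReal_card_sdiff_le [IsProbabilityMeasure P] {ι : Type*} [DecidableEq ι]
    {S : Finset ι} (hS : S.Nonempty) (T : Ω → Finset ι) (ε : ℝ) :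
    1 - P.real {ω | ε * #S ≤ #(S \ T ω)} ≤ P.real {ω | 1 - ε ≤ (#(S ∩ T ω) : ℝ) / #S} := by
  have hS0 : (0 : ℝ) < #S := mod_cast hS.card_pos
  have hcover : Set.univ ⊆
      {ω | 1 - ε ≤ (#(S ∩ T ω) : ℝ) / #S} ∪ {ω | ε * #S ≤ #(S \ T ω)} := by
    intro ω _
    have hsplit : (#(S ∩ T ω) : ℝ) + #(S \ T ω) = #S :=
      mod_cast Finset.card_inter_add_card_sdiff S (T ω)
    refine or_iff_not_imp_right.2 fun hmiss => (le_div_iff₀ hS0).2 ?_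
    have hmiss' : (#(S \ T ω) : ℝ) < ε * #S := not_le.1 hmiss
    linarith
  have htotal := (measureReal_mono (μ := P) hcover).trans (measureReal_union_le _ _)
  rw [probReal_univ] at htotal
  linarith

end Counting

section Concentration

variable {Ω : Type*} [MeasurableSpace Ω] {P : Measure Ω} {X : Ω → ℝ} {c : ℝ≥0} {s : ℝ}

theorem measureReal_abs_ge_le_of_hasSubgaussianMGF [IsFiniteMeasure P]
    (hX : HasSubgaussianMGF X c P) (hs : 0 ≤ s) :
    P.real {ω | s ≤ |X ω|} ≤ 2 * Real.exp (-s ^ 2 / (2 * c)) := by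
  have hsub : {ω | s ≤ |X ω|} ⊆ {ω | s ≤ X ω} ∪ {ω | s ≤ (-X) ω} := fun ω hω =>
    le_abs.1 (Set.mem_ofPred.1 hω)
  calc P.real {ω | s ≤ |X ω|}
      ≤ P.real {ω | s ≤ X ω} + P.real {ω | s ≤ (-X) ω} :=
        (measureReal_mono hsub).trans (measureReal_union_le _ _)
    _ ≤ _ := by linarith [hX.measure_ge_le hs, hX.neg.measure_ge_le hs]

theorem measureReal_abs_mean_ge_le_of_hasSubgaussianMGF [IsProbabilityMeasure P]
    (hX : HasSubgaussianMGF X c P) {L : ℕ} (hL : L ≠ 0) (hs : 0 ≤ s) :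
    (Measure.pi fun _ : Fin L => P).real {ω | s ≤ |(L : ℝ)⁻¹ * ∑ i, X (ω i)|} ≤
      2 * Real.exp (-(L * s ^ 2) / (2 * c)) := by
  have hL0 : (0 : ℝ) < L := by positivity
  have heval (i : Fin L) :
      HasSubgaussianMGF (fun ω : Fin L → Ω => X (ω i)) c (Measure.pi fun _ => P) := by
    rw [← (measurePreserving_eval (fun _ : Fin L => P) i).map_eq] at hX
    exact hX.of_map (measurable_pi_apply i).aemeasurable
  have hsum : HasSubgaussianMGF (fun ω : Fin L → Ω => ∑ i, X (ω i)) (∑ _ : Fin L, c)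
      (Measure.pi fun _ => P) :=
    .sum_of_iIndepFun (iIndepFun_pi fun _ => hX.aemeasurable) fun i _ => heval i
  have hset : {ω : Fin L → Ω | s ≤ |(L : ℝ)⁻¹ * ∑ i, X (ω i)|} =
      {ω | L * s ≤ |∑ i, X (ω i)|} := by
    ext ω
    rw [Set.mem_ofPred_eq, Set.mem_ofPred_eq, abs_mul, abs_of_pos (inv_pos.2 hL0),
      le_inv_mul_iff₀ hL0]
  rw [hset]
  refine (measureReal_abs_ge_le_of_hasSubgaussianMGF hsum (by positivity)).trans_eq ?_
  congr 2
  simp only [Finset.sum_const, Finset.card_univ, Fintype.card_fin, nsmul_eq_mul, NNReal.coe_mul,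
    NNReal.coe_natCast]
  field_simp

end Concentration

section LabeledSamples

variable {p L : ℕ}

instance (m : Fin p → ℝ) : IsProbabilityMeasure (gaussPi m) := by
  unfold gaussPi; infer_instance

instance (m : Fin p → ℝ) : IsProbabilityMeasure (labeledLaw m) := by
  constructor
  rw [labeledLaw, Measure.add_apply, Measure.smul_apply, Measure.smul_apply,
    Measure.map_apply (by fun_prop) .univ, Measure.map_apply (by fun_prop) .univ]
  simp [ENNReal.inv_two_add_inv_two]

theorem gaussPi_map_neg (m : Fin p → ℝ) : (gaussPi m).map (fun x => -x) = gaussPi (-m) := by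
  simp only [gaussPi, Pi.neg_def]
  rw [Measure.pi_map_pi (f := fun _ t => -t) fun _ => by fun_prop]
  simp only [gaussianReal_map_neg]

theorem labeledLaw_map_smul (m : Fin p → ℝ) :
    (labeledLaw m).map (fun z => z.2 • z.1) = gaussPi m := by
  rw [labeledLaw, Measure.map_add _ _ (by fun_prop), Measure.map_smul, Measure.map_smul,
    Measure.map_map (by fun_prop) (by fun_prop), Measure.map_map (by fun_prop) (by fun_prop)]
  have hpos : (gaussPi m).map ((fun z : (Fin p → ℝ) × ℝ => z.2 • z.1) ∘ fun x => (x, 1)) =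
      gaussPi m := by
    simp [Function.comp_def]
  have hneg : (gaussPi fun j => -m j).map
      ((fun z : (Fin p → ℝ) × ℝ => z.2 • z.1) ∘ fun x => (x, -1)) = gaussPi m := by
    simpa [Function.comp_def, Pi.neg_def] using gaussPi_map_neg (-m)
  rw [hpos, hneg, ← add_smul, ENNReal.inv_two_add_inv_two, one_smul]

theorem labeledLaw_map_mul_sub (m : Fin p → ℝ) (j : Fin p) :
    (labeledLaw m).map (fun z => z.2 * z.1 j - m j) = gaussianReal 0 1 := by
  have hcomp : (fun z : (Fin p → ℝ) × ℝ => z.2 * z.1 j - m j) =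
      (fun t => t - m j) ∘ Function.eval j ∘ fun z => z.2 • z.1 := rfl
  rw [hcomp, ← Measure.map_map (by fun_prop) (by fun_prop),
    ← Measure.map_map (by fun_prop) (by fun_prop), labeledLaw_map_smul, gaussPi,
    (measurePreserving_eval (fun j => gaussianReal (m j) 1) j).map_eq,
    gaussianReal_map_sub_const, sub_self]

theorem hasSubgaussianMGF_labeledLaw (m : Fin p → ℝ) (j : Fin p) :
    HasSubgaussianMGF (fun z => z.2 * z.1 j - m j) 1 (labeledLaw m) := by
  rw [← HasSubgaussianMGF.id_map_iff (by fun_prop), labeledLaw_map_mul_sub]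
  exact ⟨integrable_exp_mul_gaussianReal, fun t => by simp [mgf_id_gaussianReal]⟩

theorem measurable_wL (j : Fin p) :
    Measurable fun d : Fin L → (Fin p → ℝ) × ℝ => wL d j := by
  unfold wL; fun_prop

theorem wL_sub (hL : L ≠ 0) (d : Fin L → (Fin p → ℝ) × ℝ) (m : Fin p → ℝ) (j : Fin p) :
    wL d j - m j = (L : ℝ)⁻¹ * ∑ i, ((d i).2 * (d i).1 j - m j) := by
  simp only [wL, Finset.sum_sub_distrib, Finset.sum_const, Finset.card_univ, Fintype.card_fin,
    nsmul_eq_mul]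
  field_simp

theorem measureReal_abs_wL_sub_ge_le (m : Fin p → ℝ) (j : Fin p) {s : ℝ}
    (hs : 0 ≤ s) :
    (Measure.pi fun _ : Fin L => labeledLaw m).real {d | s ≤ |wL d j - m j|} ≤
      2 * Real.exp (-(L * s ^ 2) / 2) := by
  rcases eq_or_ne L 0 with rfl | hL
  · exact measureReal_le_one.trans (by norm_num)
  simp_rw [wL_sub hL]
  simpa using
    measureReal_abs_mean_ge_le_of_hasSubgaussianMGF (hasSubgaussianMGF_labeledLaw m j) hL hs

end LabeledSamples

section Rate

theorem exp_neg_mul_sq_le_rpow {β lam u p k L : ℝ} (hβ : 0 ≤ β) (hlam : 0 < lam) (hk : 0 < k)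
    (hkp : 2 * k ≤ p) (hL : 2 * β * k * Real.log (p - k) / lam ≤ L) :
    Real.exp (-(L * (u * √(lam / k)) ^ 2) / 2) ≤ (p / 2) ^ (-(β * u ^ 2)) := by
  have hp : 0 < p / 2 := by linarith
  have hlog : Real.log (p / 2) ≤ Real.log (p - k) := Real.log_le_log hp (by linarith)
  have henergy : β * u ^ 2 * Real.log (p / 2) ≤ L * (u * √(lam / k)) ^ 2 / 2 := by
    calc β * u ^ 2 * Real.log (p / 2) ≤ β * u ^ 2 * Real.log (p - k) := by gcongr
      _ = 2 * β * k * Real.log (p - k) / lam * (u ^ 2 * (lam / k)) / 2 := by field_simp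
      _ ≤ L * (u ^ 2 * (lam / k)) / 2 := by gcongr
      _ = L * (u * √(lam / k)) ^ 2 / 2 := by rw [mul_pow, Real.sq_sqrt (by positivity)]
  rw [Real.rpow_def_of_pos hp, Real.exp_le_exp]
  linarith

theorem mul_half_rpow_div_rpow {p : ℝ} (hp : 0 < p) (b c : ℝ) :
    p * (p / 2) ^ (-(b + c)) / p ^ (1 - b) = 2 ^ b * (p / 2) ^ (-c) := by
  have hsplit : p = p ^ (1 - b) * (2 ^ b * (p / 2) ^ b) := by
    rw [← Real.mul_rpow (by norm_num) (by positivity), mul_div_cancel₀ _ two_ne_zero,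
      ← Real.rpow_add hp, sub_add_cancel, Real.rpow_one]
  have hcancel : (p / 2) ^ b * (p / 2) ^ (-(b + c)) = (p / 2) ^ (-c) := by
    rw [← Real.rpow_add (by positivity)]
    ring_nf
  rw [div_eq_iff (Real.rpow_pos_of_pos hp _).ne', ← hcancel]
  nth_rw 1 [hsplit]
  ring

variable {p n L : ℕ} {m : Fin p → ℝ} {S : Finset (Fin p)} {β βt lam ε : ℝ}
  {T : (Fin L → (Fin p → ℝ) × ℝ) → Finset (Fin p)}

theorem measureReal_mul_sqrt_le_abs_wL_sub_le {k u : ℝ} (hβ : 0 ≤ β) (hlam : 0 < lam) (hk : 0 < k)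
    (hkp : 2 * k ≤ p) (hL : 2 * β * k * Real.log (p - k) / lam ≤ L) (hu : 0 ≤ u) (j : Fin p) :
    (Measure.pi fun _ : Fin L => labeledLaw m).real {d | u * √(lam / k) ≤ |wL d j - m j|} ≤
      2 * ((p : ℝ) / 2) ^ (-(β * u ^ 2)) :=
  (measureReal_abs_wL_sub_ge_le m j (by positivity)).trans
    (mul_le_mul_of_nonneg_left (exp_neg_mul_sq_le_rpow hβ hlam hk hkp hL) zero_le_two)

theorem measureReal_card_sdiff_ge_le_rpow (hβt : 0 < βt) (hβ : βt < β) (hlam : 0 < lam)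
    (hε : 0 < ε) (hS : S.Nonempty) (hSn : 2 * #S ≤ n) (hn : (p : ℝ) ^ (1 - βt) ≤ n)
    (hL : 2 * β * #S * Real.log (p - #S) / lam ≤ L) (hm0 : ∀ j ∉ S, m j = 0)
    (hmS : ∀ j ∈ S, √(lam / #S) ≤ |m j|) (hT : ∀ d, IsTopAbs n (wL d) (T d)) :
    (Measure.pi fun _ : Fin L => labeledLaw m).real {d | ε * #S ≤ #(S \ T d)} ≤
      (4 * 2 ^ βt + 2 / ε) * ((p : ℝ) / 2) ^ (-((β - βt) ^ 2 / (4 * β))) := by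
  set c := (β - βt) ^ 2 / (4 * β) with hc
  -- This `s` balances the two error exponents: `β s² - βt = β (1 - s)² = c`.
  set s := (β + βt) / (2 * β) with hs
  have hβ0 : 0 < β := hβt.trans hβ
  have hS0 : (0 : ℝ) < #S := mod_cast hS.card_pos
  have hSnR : 2 * (#S : ℝ) ≤ n := mod_cast hSn
  have hSp : 2 * (#S : ℝ) ≤ p := mod_cast hSn.trans (hT 0).le
  have hp0 : (0 : ℝ) < p := by linarith
  have hcompl : (#Sᶜ : ℝ) ≤ p := by
    simpa using (Nat.cast_le (α := ℝ)).2 (Finset.card_le_univ Sᶜ)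
  have hs0 : 0 ≤ s := by positivity
  have hs1 : 0 ≤ 1 - s := by rw [hs, sub_nonneg, div_le_one (by positivity)]; linarith
  have htail {u : ℝ} (hu : 0 ≤ u) (j : Fin p) :=
    measureReal_mul_sqrt_le_abs_wL_sub_le (m := m) hβ0.le hlam hS0 hSp hL hu j
  have hoff : ∑ j ∈ Sᶜ, (Measure.pi fun _ : Fin L => labeledLaw m).real
      {d | s * √(lam / #S) ≤ |wL d j - m j|} ≤ #Sᶜ * (2 * ((p : ℝ) / 2) ^ (-(βt + c))) := by
    have hexp : β * s ^ 2 = βt + c := by rw [hs, hc]; field_simp; ring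
    simpa only [hexp, nsmul_eq_mul] using Finset.sum_le_card_nsmul Sᶜ _ _ fun j _ => htail hs0 j
  have hon : ∑ j ∈ S, (Measure.pi fun _ : Fin L => labeledLaw m).real
      {d | √(lam / #S) - s * √(lam / #S) ≤ |wL d j - m j|} ≤
        #S * (2 * ((p : ℝ) / 2) ^ (-c)) := by
    have hexp : β * (1 - s) ^ 2 = c := by rw [hs, hc]; field_simp; ring
    simpa only [hexp, nsmul_eq_mul, one_sub_mul] using
      Finset.sum_le_card_nsmul S _ _ fun j _ => htail hs1 j
  calc _ ≤ _ := measureReal_card_sdiff_ge_le measurable_wL hT hS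
        (by have := hS.card_pos; lia) hm0 hmS hε
    _ ≤ (p * (2 * ((p : ℝ) / 2) ^ (-(βt + c)))) / ((p : ℝ) ^ (1 - βt) / 2) +
        (#S * (2 * ((p : ℝ) / 2) ^ (-c))) / (ε * #S) := by
        gcongr
        · exact hoff.trans (by gcongr)
        · linarith
    _ = 4 * (p * ((p : ℝ) / 2) ^ (-(βt + c)) / (p : ℝ) ^ (1 - βt)) +
        2 / ε * ((p : ℝ) / 2) ^ (-c) := by field_simp; ring
    _ = _ := by rw [mul_half_rpow_div_rpow hp0]; ring

end Rate

theorem isLittleO_floor_mul_rpow {a b c : ℝ} (hab : a < b) (hc : 0 ≤ c) :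
    (fun p : ℕ => (⌊c * (p : ℝ) ^ a⌋₊ : ℝ)) =o[atTop] fun p : ℕ => (p : ℝ) ^ b := by
  have hpow : (fun p : ℕ => (p : ℝ) ^ a) =o[atTop] fun p : ℕ => (p : ℝ) ^ b := by
    refine Asymptotics.isLittleO_of_tendsto' ?_ ?_
    · filter_upwards [eventually_gt_atTop 0] with p hp h
      exact absurd h (by positivity)
    · refine ((tendsto_rpow_neg_atTop (sub_pos.2 hab)).comp tendsto_natCast_atTop_atTop).congr' ?_
      filter_upwards [eventually_gt_atTop 0] with p hp
      rw [Function.comp_apply, neg_sub, Real.rpow_sub (by positivity)]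
  refine Asymptotics.IsBigO.trans_isLittleO (.of_bound c (.of_forall fun p => ?_)) hpow
  rw [Real.norm_natCast, Real.norm_of_nonneg (by positivity)]
  exact Nat.floor_le (by positivity)

theorem tendsto_floor_mul_rpow_atTop {a c : ℝ} (ha : 0 < a) (hc : 0 < c) :
    Tendsto (fun p : ℕ => ⌊c * (p : ℝ) ^ a⌋₊) atTop atTop :=
  tendsto_nat_floor_atTop.comp
    (((tendsto_rpow_atTop ha).comp tendsto_natCast_atTop_atTop).const_mul_atTop hc)

theorem stmt10_general {β βt lam ε : ℝ} (hβt : 0 < βt) (hβ : βt < β) (hlam : 0 < lam)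
    (hε : 0 < ε) {L : ℕ → ℕ} {S : ∀ p, Finset (Fin p)} {μ : ∀ p, Fin p → ℝ}
    (hS : ∀ᶠ p in atTop, (S p).Nonempty)
    (hSo : (fun p : ℕ => (#(S p) : ℝ)) =o[atTop] fun p : ℕ => (p : ℝ) ^ (1 - βt))
    (hL : ∀ p : ℕ, 2 * β * #(S p) * Real.log (p - #(S p)) / lam ≤ L p)
    (hμ0 : ∀ p, ∀ j ∉ S p, μ p j = 0) (hμS : ∀ p, ∀ j ∈ S p, √(lam / #(S p)) ≤ |μ p j|)
    {T : ∀ p, (Fin (L p) → (Fin p → ℝ) × ℝ) → Finset (Fin p)}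
    (hT : ∀ (p : ℕ) d, IsTopAbs ⌈(p : ℝ) ^ (1 - βt)⌉₊ (wL d) (T p d)) :
    Tendsto (fun p : ℕ => (Measure.pi fun _ : Fin (L p) => labeledLaw (μ p)).real
      {d | 1 - ε ≤ (#(S p ∩ T p d) : ℝ) / #(S p)}) atTop (nhds 1) := by
  have hrate : Tendsto (fun p : ℕ => 1 - (4 * 2 ^ βt + 2 / ε) *
      ((p : ℝ) / 2) ^ (-((β - βt) ^ 2 / (4 * β)))) atTop (nhds 1) := by
    have hexp : 0 < (β - βt) ^ 2 / (4 * β) :=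
      div_pos (pow_pos (sub_pos.2 hβ) 2) (by linarith)
    have hhalf : Tendsto (fun p : ℕ => (p : ℝ) / 2) atTop atTop :=
      tendsto_natCast_atTop_atTop.atTop_div_const two_pos
    simpa using
      (((tendsto_rpow_neg_atTop hexp).comp hhalf).const_mul (4 * 2 ^ βt + 2 / ε)).const_sub 1
  refine tendsto_of_tendsto_of_tendsto_of_le_of_le' hrate tendsto_const_nhds ?_
    (.of_forall fun p => measureReal_le_one)
  filter_upwards [hS, hSo.bound (half_pos one_pos)] with p hSp hSo'
  have hn : (p : ℝ) ^ (1 - βt) ≤ ⌈(p : ℝ) ^ (1 - βt)⌉₊ := Nat.le_ceil _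
  have hSn : 2 * #(S p) ≤ ⌈(p : ℝ) ^ (1 - βt)⌉₊ := by
    rw [Real.norm_natCast, Real.norm_of_nonneg (by positivity)] at hSo'
    have : (2 * #(S p) : ℝ) ≤ ⌈(p : ℝ) ^ (1 - βt)⌉₊ := by linarith
    exact_mod_cast this
  exact (sub_le_sub_left (measureReal_card_sdiff_ge_le_rpow hβt hβ hlam hε hSp hSn hn (hL p)
    (hμ0 p) (hμS p) (hT p)) 1).trans (one_sub_measureReal_card_sdiff_le hSp (T p) ε)

/-- Lemma 8: screening with the labeled data. With `k = ⌊c₁ p^α⌋`,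
`L = ⌈(2βk/λ) log(p-k)⌉`, `β ∈ (0, 1-α)` and `β̃ = β - ε̃ > 0`, the set `S_L` of the top
`⌈p^(1-β̃)⌉` magnitudes of `w_L` contains a `(1-ε)`-fraction of the support with probability
tending to one as `p → ∞`. -/
theorem stmt10 (α β lam c1 εt : ℝ)
    (hα : 0 < α) (hα2 : α < 1) (hβ : 0 < β) (hβ2 : β < 1 - α)
    (hεt : 0 < εt) (hβt : 0 < β - εt)
    (hlam : 0 < lam) (hc1 : 0 < c1)
    (k L : ℕ → ℕ)
    (hk : ∀ p : ℕ, k p = ⌊c1 * (p : ℝ) ^ α⌋₊)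
    (hL : ∀ p : ℕ, L p = ⌈2 * β * (k p : ℝ) * Real.log ((p : ℝ) - (k p : ℝ)) / lam⌉₊)
    (S : ∀ p : ℕ, Finset (Fin p)) (μ : ∀ p : ℕ, Fin p → ℝ)
    (hS : ∀ p, (S p).card = k p)
    (hμ0 : ∀ p, ∀ j, j ∉ S p → μ p j = 0)
    (hμ1 : ∀ p, ∀ j ∈ S p,
      μ p j = Real.sqrt (lam / (k p : ℝ)) ∨ μ p j = -Real.sqrt (lam / (k p : ℝ)))
    (SL : ∀ p : ℕ, (Fin (L p) → (Fin p → ℝ) × ℝ) → Finset (Fin p))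
    (hSL : ∀ (p : ℕ) d, IsTopAbs ⌈(p : ℝ) ^ (1 - (β - εt))⌉₊ (wL d) (SL p d)) :
    ∀ ε > (0 : ℝ), Tendsto (fun p : ℕ =>
      ((Measure.pi fun _ : Fin (L p) => labeledLaw (μ p))
        {d | 1 - ε ≤ ((S p ∩ SL p d).card : ℝ) / (k p : ℝ)}).toReal)
      atTop (nhds 1) := by
  obtain rfl : k = fun p => #(S p) := funext fun p => (hS p).symm
  have hSo := isLittleO_floor_mul_rpow (show α < 1 - (β - εt) by linarith) hc1.le
  have hSne := (tendsto_floor_mul_rpow_atTop hα hc1).eventually_gt_atTop 0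
  simp only [← hk] at hSo hSne
  exact fun ε hε => stmt10_general hβt (sub_lt_self β hεt) hlam hε
    (hSne.mono fun p => Finset.card_pos.1) hSo (fun p => hL p ▸ Nat.le_ceil _) hμ0
    (fun p j hj => ((abs_eq (Real.sqrt_nonneg _)).2 (hμ1 p j hj)).ge) hSL
end
end

section
/- Let λ > 0, let k ≥ 1 be an integer, and let w ~ N(0, (k−1)/k). Then E[tanh(λ + √λ·w)] ≤ λ. -/
open MeasureTheory ProbabilityTheory
open scoped ENNReal NNReal

/-!
The centered Gaussian law is invariant under `w ↦ -w`, so the expectation is unchanged when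
`tanh (a + b)`, with `b = √λ * w`, is replaced by the average of `tanh (a + b)` and `tanh (a - b)`.
By the addition formulas this average equals
`sinh a * cosh a / (cosh a ^ 2 + sinh b ^ 2)`, which for `0 ≤ a` is largest at `b = 0`, where it
is `tanh a ≤ a`.
-/

lemma sinh_le_mul_cosh {a : ℝ} (ha : 0 ≤ a) : Real.sinh a ≤ a * Real.cosh a := by
  have deriv_le : ∀ x ∈ interior (Set.Icc 0 a), deriv Real.sinh x ≤ Real.cosh a := by
    intro x hx
    obtain ⟨hx0, hxa⟩ := interior_subset hx
    rw [Real.deriv_sinh, Real.cosh_le_cosh]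
    exact abs_le_abs_of_nonneg hx0 hxa
  have mean_value := (convex_Icc 0 a).image_sub_le_mul_sub_of_deriv_le
    Real.continuous_sinh.continuousOn Real.differentiable_sinh.differentiableOn deriv_le
    0 (Set.left_mem_Icc.2 ha) a (Set.right_mem_Icc.2 ha) ha
  simpa only [Real.sinh_zero, sub_zero, mul_comm] using mean_value

lemma tanh_le_self {a : ℝ} (ha : 0 ≤ a) : Real.tanh a ≤ a := by
  rw [Real.tanh_eq_sinh_div_cosh, div_le_iff₀ (Real.cosh_pos a)]
  exact sinh_le_mul_cosh ha

lemma tanh_nonneg {a : ℝ} (ha : 0 ≤ a) : 0 ≤ Real.tanh a := by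
  rw [Real.tanh_eq_sinh_div_cosh]
  exact div_nonneg (Real.sinh_nonneg_iff.2 ha) (Real.cosh_pos a).le

lemma continuous_tanh : Continuous Real.tanh := by
  simp only [funext Real.tanh_eq_sinh_div_cosh]
  exact Real.continuous_sinh.div Real.continuous_cosh fun x ↦ (Real.cosh_pos x).ne'

lemma tanh_add_tanh (x y : ℝ) :
    Real.tanh x + Real.tanh y = Real.sinh (x + y) / (Real.cosh x * Real.cosh y) := by
  rw [Real.tanh_eq_sinh_div_cosh, Real.tanh_eq_sinh_div_cosh, Real.sinh_add,
    div_add_div _ _ (Real.cosh_pos x).ne' (Real.cosh_pos y).ne']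

lemma cosh_add_mul_cosh_sub (a b : ℝ) :
    Real.cosh (a + b) * Real.cosh (a - b) = Real.cosh a ^ 2 + Real.sinh b ^ 2 := by
  rw [Real.cosh_add, Real.cosh_sub]
  linear_combination Real.cosh a ^ 2 * Real.cosh_sq b + Real.sinh b ^ 2 * Real.cosh_sq a

lemma tanh_add_add_tanh_sub_le {a : ℝ} (ha : 0 ≤ a) (b : ℝ) :
    Real.tanh (a + b) + Real.tanh (a - b) ≤ 2 * Real.tanh a := by
  have sinh_two_mul : Real.sinh (2 * a) = 2 * Real.tanh a * Real.cosh a ^ 2 := by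
    rw [Real.sinh_two_mul, Real.tanh_eq_sinh_div_cosh]
    field_simp
  calc Real.tanh (a + b) + Real.tanh (a - b)
      = Real.sinh (2 * a) / (Real.cosh a ^ 2 + Real.sinh b ^ 2) := by
        rw [tanh_add_tanh, cosh_add_mul_cosh_sub, add_add_sub_cancel, two_mul]
    _ ≤ 2 * Real.tanh a := by
        rw [div_le_iff₀ (by positivity), sinh_two_mul]
        have := tanh_nonneg ha
        gcongr
        exact le_add_of_nonneg_right (sq_nonneg _)

section NegInvariant

variable {G : Type*} [MeasurableSpace G] [AddGroup G] [MeasurableNeg G]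
  {μ : Measure G} [μ.IsNegInvariant]

lemma integral_add_comp_neg {E : Type*} [NormedAddCommGroup E] [NormedSpace ℝ E] {f : G → E}
    (hf : Integrable f μ) : ∫ x, (f x + f (-x)) ∂μ = (2 : ℝ) • ∫ x, f x ∂μ := by
  rw [integral_add hf hf.comp_neg, integral_neg_eq_self, two_smul]

theorem stmt16_general [IsProbabilityMeasure μ] {a : ℝ} (ha : 0 ≤ a) {f : G → ℝ} (hf : f.Odd)
    (hfm : AEStronglyMeasurable f μ) : ∫ x, Real.tanh (a + f x) ∂μ ≤ Real.tanh a := by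
  have integrable_tanh : Integrable (fun x ↦ Real.tanh (a + f x)) μ :=
    .of_bound (continuous_tanh.comp_aestronglyMeasurable (hfm.const_add a)) 1
      (ae_of_all _ fun x ↦ (Real.abs_tanh_lt_one _).le)
  have symmetrized : 2 * ∫ x, Real.tanh (a + f x) ∂μ ≤ 2 * Real.tanh a :=
    calc 2 * ∫ x, Real.tanh (a + f x) ∂μ
        = ∫ x, (Real.tanh (a + f x) + Real.tanh (a + f (-x))) ∂μ :=
          (integral_add_comp_neg integrable_tanh).symm
      _ ≤ ∫ _, 2 * Real.tanh a ∂μ := by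
          refine integral_mono (integrable_tanh.add integrable_tanh.comp_neg)
            (integrable_const _) fun x ↦ ?_
          simpa only [hf x, ← sub_eq_add_neg] using tanh_add_add_tanh_sub_le ha (f x)
      _ = 2 * Real.tanh a := by rw [integral_const, probReal_univ, one_smul]
  exact le_of_mul_le_mul_left symmetrized two_pos

end NegInvariant

instance isNegInvariant_gaussianReal_zero (v : ℝ≥0) : (gaussianReal 0 v).IsNegInvariant where
  neg_eq_self := gaussianReal_map_neg.trans (by rw [neg_zero])

/-- for `λ > 0`, an integer `k ≥ 1` and `w ~ N(0, (k-1)/k)`,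
`E[tanh(λ + √λ w)] ≤ λ`. -/
theorem stmt16 (lam : ℝ) (hlam : 0 < lam) (k : ℕ) (hk : 1 ≤ k) :
    (∫ w, Real.tanh (lam + Real.sqrt lam * w)
      ∂(gaussianReal 0 (((k - 1 : ℕ) : ℝ≥0) / (k : ℝ≥0)))) ≤ lam :=
  (stmt16_general hlam.le (mul_neg (Real.sqrt lam)) (by fun_prop)).trans (tanh_le_self hlam.le)
end
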